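/- arXiv:2310.20007 — 2 statements merged into one kernel-verified Lean document; each statement's English description precedes it below -/
import Mathlib

section
/- Let Θ be a set of time-inhomogeneous tabular environments on common state space S, action space A and horizon H, with a fixed initial state s₁, and let E ↦ π*_E be a choice of optimal policy for each E ∈ Θ (i.e., V_{1,π}^{E}(s₁) ≤ V_{1,π*_E}^{E}(s₁) for every policy π). Suppose for each h = 1,…,H the family {P_h^{E} : E ∈ Θ} admits a finite subset C_h^P of cardinality L_h^P that is an (ε/(4H²))-cover in the metric l1(P,P') = max_{(s,a)} Σ_{s'} |P(s'|s,a) − P'(s'|s,a)|, and the family {r_h^{E} : E ∈ Θ} admits a finite subset C_h^R of cardinality L_h^R that is an (ε/(4H))-cover in the metric max_{(s,a)} |r(s,a) − r'(s,a)|. Then there exists a layered ε-value partition of Θ with at most Π_{h=1}^{H} L_h^P · L_h^R classes; that is, a partition {Θ_k} of Θ such that (i) each class Θ_k has the form {E ∈ Θ : P_h^{E} ∈ A_{k,h} and r_h^{E} ∈ B_{k,h} for all h} for some sets A_{k,h}, B_{k,h}, and (ii) for every k and all E, E' ∈ Θ_k, V_{1,π*_E}^{E}(s₁) − V_{1,π*_E}^{E'}(s₁)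 ≤ ε. -/
open Finset

/-- A tabular environment: a pair of (time-indexed) transition kernels and rewards. -/
abbrev Env (S A : Type*) := (ℕ → S → A → S → ℝ) × (ℕ → S → A → ℝ)

variable {S A : Type*}

/-- Value function: `val H P r pol k s` is the value at the layer with `k` steps
remaining (i.e. at layer `H + 1 - k`); thus `val H P r pol H s₁` is `V_{1,π}(s₁)`. -/
noncomputable def val [Fintype S] [Fintype A] (H : ℕ) (P : ℕ → S → A → S → ℝ)
    (r : ℕ → S → A → ℝ) (pol : ℕ → S → A → ℝ) : ℕ → S → ℝ
  | 0 => fun _ => 0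
  | (k + 1) => fun s => ∑ a, pol (H - k) s a *
      (r (H - k) s a + ∑ s', P (H - k) s a s' * val H P r pol k s')

/-- Each `P h (· | s,a)`, `h = 1,…,H`, is a probability distribution on `S`. -/
def IsKernel [Fintype S] [Fintype A] (H : ℕ) (P : ℕ → S → A → S → ℝ) : Prop :=
  ∀ h ∈ Finset.Icc 1 H, ∀ s a, (∀ s', 0 ≤ P h s a s') ∧ ∑ s', P h s a s' = 1

/-- Each mean reward `r h s a`, `h = 1,…,H`, lies in `[0,1]`. -/
def IsReward (H : ℕ) (r : ℕ → S → A → ℝ) : Prop :=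
  ∀ h ∈ Finset.Icc 1 H, ∀ (s : S) (a : A), 0 ≤ r h s a ∧ r h s a ≤ 1

/-- Each `pol h (· | s)`, `h = 1,…,H`, is a probability distribution on `A`. -/
def IsPolicy [Fintype A] (H : ℕ) (pol : ℕ → S → A → ℝ) : Prop :=
  ∀ h ∈ Finset.Icc 1 H, ∀ s : S, (∀ a, 0 ≤ pol h s a) ∧ ∑ a, pol h s a = 1

/-!
The value of a fixed policy is Lipschitz in the environment: replacing the rewards and kernels
layer by layer, the layer followed by `k` others contributes its reward error plus `k` times its
`l1` kernel error, because the value of those `k` layers lies in `[0, k]`. Label each layer of an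
environment by a cover centre within the cover radius, chosen as a function of that layer alone. The
fibres of the resulting map to tuples of centres are then layered classes, and by the triangle
inequality two environments in the same fibre differ by at most twice the cover radius in each
layer. The resulting gap bound holds for every common policy, in particular for the optimal policy
of either environment.
-/

section Distances

variable [Fintype S] [Fintype A] [Nonempty S] [Nonempty A]

/-- The `l1` distance between one-step transition kernels, maximised over state-action pairs. -/
noncomputable def kernelDist (p q : S → A → S → ℝ) : ℝ :=
  Finset.univ.sup' Finset.univ_nonempty fun z : S × A => ∑ s', |p z.1 z.2 s' - q z.1 z.2 s'|

/-- The distance between one-step mean rewards, maximised over state-action pairs. -/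
noncomputable def rewardDist (r q : S → A → ℝ) : ℝ :=
  Finset.univ.sup' Finset.univ_nonempty fun z : S × A => |r z.1 z.2 - q z.1 z.2|

theorem sum_abs_sub_le_kernelDist (p q : S → A → S → ℝ) (s : S) (a : A) :
    ∑ s', |p s a s' - q s a s'| ≤ kernelDist p q :=
  Finset.le_sup' (fun z : S × A => ∑ s', |p z.1 z.2 s' - q z.1 z.2 s'|) (Finset.mem_univ (s, a))

theorem abs_sub_le_rewardDist (r q : S → A → ℝ) (s : S) (a : A) :
    |r s a - q s a| ≤ rewardDist r q :=
  Finset.le_sup' (fun z : S × A => |r z.1 z.2 - q z.1 z.2|) (Finset.mem_univ (s, a))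

theorem kernelDist_triangle_right (p q c : S → A → S → ℝ) :
    kernelDist p q ≤ kernelDist p c + kernelDist q c := by
  refine Finset.sup'_le _ _ fun ⟨s, a⟩ _ => ?_
  calc ∑ s', |p s a s' - q s a s'|
      ≤ ∑ s', (|p s a s' - c s a s'| + |q s a s' - c s a s'|) :=
        Finset.sum_le_sum fun s' _ => dist_triangle_right (p s a s') (q s a s') (c s a s')
    _ = ∑ s', |p s a s' - c s a s'| + ∑ s', |q s a s' - c s a s'| := Finset.sum_add_distrib
    _ ≤ kernelDist p c + kernelDist q c :=
        add_le_add (sum_abs_sub_le_kernelDist p c s a) (sum_abs_sub_le_kernelDist q c s a)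

theorem rewardDist_triangle_right (r q c : S → A → ℝ) :
    rewardDist r q ≤ rewardDist r c + rewardDist q c :=
  Finset.sup'_le _ _ fun ⟨s, a⟩ _ =>
    (dist_triangle_right (r s a) (q s a) (c s a)).trans
      (add_le_add (abs_sub_le_rewardDist r c s a) (abs_sub_le_rewardDist q c s a))

end Distances

section ValueDifference

theorem sub_mem_Icc_one_of_lt {H k : ℕ} (hk : k < H) : H - k ∈ Finset.Icc 1 H :=
  Finset.mem_Icc.2 ⟨Nat.sub_pos_of_lt hk, Nat.sub_le H k⟩

theorem sum_mul_sub_sum_mul_le {ι : Type*} [Fintype ι] {p p' v v' : ι → ℝ} {b c : ℝ}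
    (hp : p ∈ stdSimplex ℝ ι) (hv : ∀ i, v i - v' i ≤ b) (hv' : ∀ i, |v' i| ≤ c) :
    ∑ i, p i * v i - ∑ i, p' i * v' i ≤ b + c * ∑ i, |p i - p' i| := by
  have hchange_values : ∑ i, p i * (v i - v' i) ≤ b :=
    (convex_Iic b).sum_mem (fun i _ => hp.1 i) hp.2 fun i _ => hv i
  have hchange_weights : ∑ i, (p i - p' i) * v' i ≤ c * ∑ i, |p i - p' i| := by
    rw [Finset.mul_sum]
    refine Finset.sum_le_sum fun i _ => ?_
    calc (p i - p' i) * v' i ≤ |p i - p' i| * |v' i| := (le_abs_self _).trans (abs_mul _ _).le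
      _ ≤ c * |p i - p' i| := by
        rw [mul_comm]
        exact mul_le_mul_of_nonneg_right (hv' i) (abs_nonneg _)
  calc ∑ i, p i * v i - ∑ i, p' i * v' i
      = ∑ i, p i * (v i - v' i) + ∑ i, (p i - p' i) * v' i := by
        rw [← Finset.sum_sub_distrib, ← Finset.sum_add_distrib]
        exact Finset.sum_congr rfl fun i _ => by ring
    _ ≤ b + c * ∑ i, |p i - p' i| := add_le_add hchange_values hchange_weights

variable [Fintype S] [Fintype A] {H : ℕ} {P P' : ℕ → S → A → S → ℝ} {r r' : ℕ → S → A → ℝ}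
  {pol : ℕ → S → A → ℝ}

theorem val_mem_Icc (hP : IsKernel H P) (hr : IsReward H r) (hpol : IsPolicy H pol) {k : ℕ}
    (hk : k ≤ H) (s : S) : val H P r pol k s ∈ Set.Icc (0 : ℝ) k := by
  induction k generalizing s with
  | zero => simp [_root_.val]
  | succ k ih =>
    have hlayer : H - k ∈ Finset.Icc 1 H := sub_mem_Icc_one_of_lt hk
    obtain ⟨hpol_nonneg, hpol_sum⟩ := hpol _ hlayer s
    refine (convex_Icc (0 : ℝ) ((k + 1 : ℕ) : ℝ)).sum_mem (fun a _ => hpol_nonneg a) hpol_sum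
      fun a _ => ?_
    obtain ⟨hP_nonneg, hP_sum⟩ := hP _ hlayer s a
    have hnext : ∑ s', P (H - k) s a s' * val H P r pol k s' ∈ Set.Icc (0 : ℝ) k :=
      (convex_Icc (0 : ℝ) k).sum_mem (fun s' _ => hP_nonneg s') hP_sum
        fun s' _ => ih (Nat.le_of_succ_le hk) s'
    have hreward := hr _ hlayer s a
    rw [Nat.cast_succ]
    exact ⟨add_nonneg hreward.1 hnext.1, by linarith [hreward.2, hnext.2]⟩

theorem val_sub_val_le [Nonempty S] [Nonempty A] {δP δR : ℕ → ℝ}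
    (hP : IsKernel H P) (hP' : IsKernel H P') (hr' : IsReward H r') (hpol : IsPolicy H pol)
    (hδP : ∀ h ∈ Finset.Icc 1 H, kernelDist (P h) (P' h) ≤ δP h)
    (hδR : ∀ h ∈ Finset.Icc 1 H, rewardDist (r h) (r' h) ≤ δR h) {k : ℕ} (hk : k ≤ H) (s : S) :
    val H P r pol k s - val H P' r' pol k s ≤
      ∑ j ∈ Finset.range k, (δR (H - j) + j * δP (H - j)) := by
  induction k generalizing s with
  | zero => simp [_root_.val]
  | succ k ih =>
    have hlayer : H - k ∈ Finset.Icc 1 H := sub_mem_Icc_one_of_lt hk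
    have hk' : k ≤ H := Nat.le_of_succ_le hk
    obtain ⟨hpol_nonneg, hpol_sum⟩ := hpol _ hlayer s
    simp only [_root_.val]
    rw [← Finset.sum_sub_distrib]
    simp only [← mul_sub]
    refine (convex_Iic (_ : ℝ)).sum_mem (fun a _ => hpol_nonneg a) hpol_sum fun a _ => ?_
    have hreward : r (H - k) s a - r' (H - k) s a ≤ δR (H - k) :=
      (le_abs_self _).trans ((abs_sub_le_rewardDist _ _ s a).trans (hδR _ hlayer))
    have hval' (s' : S) : |val H P' r' pol k s'| ≤ k := by
      obtain ⟨hnonneg, hle⟩ := val_mem_Icc hP' hr' hpol hk' s'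
      rwa [abs_of_nonneg hnonneg]
    have hnext := sum_mul_sub_sum_mul_le (p' := P' (H - k) s a) (hP _ hlayer s a) (ih hk') hval'
    have hkernel : (k : ℝ) * ∑ s', |P (H - k) s a s' - P' (H - k) s a s'| ≤ k * δP (H - k) :=
      mul_le_mul_of_nonneg_left
        ((sum_abs_sub_le_kernelDist _ _ s a).trans (hδP _ hlayer)) k.cast_nonneg
    rw [Set.mem_Iic, Finset.sum_range_succ]
    linarith

end ValueDifference

section LayeredPartition

/-- `C` is a `δ`-cover of `F` for the distance `M`, which is any real-valued function of two
points. The centres need not belong to `F`, and `M` is evaluated with the centre on the right. -/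
def IsFiniteCover {Y : Type*} (M : Y → Y → ℝ) (δ : ℝ) (F : Set Y) (C : Finset Y) : Prop :=
  ∀ y ∈ F, ∃ c ∈ C, M y c ≤ δ

/-- The class of a layered partition of `Θ` cut out by the sets `U h` of kernels and `W h` of
rewards, one condition for each layer `h = 1, …, H`. -/
def layeredClass (H : ℕ) (Θ : Set (Env S A)) (U : ℕ → Set (S → A → S → ℝ))
    (W : ℕ → Set (S → A → ℝ)) : Set (Env S A) :=
  {E ∈ Θ | ∀ h ∈ Finset.Icc 1 H, E.1 h ∈ U h ∧ E.2 h ∈ W h}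

theorem IsFiniteCover.exists_labelling {Y : Type*} {M : Y → Y → ℝ} {δ : ℝ} {F : Set Y}
    {C : Finset Y} (hC : IsFiniteCover M δ F C) (htriangle : ∀ y y' c, M y y' ≤ M y c + M y' c) :
    ∃ label : Y → Y, (∀ y ∈ F, label y ∈ C) ∧
      ∀ y ∈ F, ∀ y' ∈ F, label y = label y' → M y y' ≤ 2 * δ := by
  classical
  have hcenter (y : Y) : ∃ c, y ∈ F → c ∈ C ∧ M y c ≤ δ :=
    if hy : y ∈ F then (hC y hy).imp fun _ hc _ => hc else ⟨y, fun hy' => absurd hy' hy⟩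
  choose label hlabel using hcenter
  refine ⟨label, fun y hy => (hlabel y hy).1, fun y hy y' hy' heq => ?_⟩
  calc M y y' ≤ M y (label y) + M y' (label y) := htriangle y y' (label y)
    _ ≤ δ + δ := add_le_add (hlabel y hy).2 (heq ▸ (hlabel y' hy').2)
    _ = 2 * δ := (two_mul δ).symm

theorem exists_fin_enum_pi {ι : Type*} {L : ι → Type*} [∀ i, Nonempty (L i)]
    {I : Finset ι} {C : ∀ i, Finset (L i)} {n : ℕ} (hn : ∏ i ∈ I, (C i).card = n) :
    ∃ c : Fin n → ∀ i, L i,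
      ∀ σ : ∀ i, L i, (∀ i ∈ I, σ i ∈ C i) → ∃! k, ∀ i ∈ I, σ i = c k i := by
  classical
  let e : I.pi C ≃ Fin n := (I.pi C).equivFinOfCardEq ((Finset.card_pi I C).trans hn)
  let c (k : Fin n) (i : ι) : L i :=
    if hi : i ∈ I then (e.symm k).1 i hi else Classical.arbitrary (L i)
  have agree_iff (σ : ∀ i, L i) (hσ : ∀ i ∈ I, σ i ∈ C i) (k : Fin n) :
      (∀ i ∈ I, σ i = c k i) ↔ k = e ⟨fun i _ => σ i, Finset.mem_pi.2 hσ⟩ := by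
    rw [← Equiv.symm_apply_eq, Subtype.ext_iff]
    simp only [funext_iff]
    exact forall₂_congr fun i hi => by simp only [c, dif_pos hi, eq_comm]
  refine ⟨c, fun σ hσ => ?_⟩
  simp only [agree_iff σ hσ, existsUnique_eq]

theorem layered_value_partition_of_covers_general
    [Fintype S] [Fintype A] [Nonempty S] [Nonempty A] {H : ℕ} {Θ : Set (Env S A)}
    (hΘ : ∀ E ∈ Θ, IsKernel H E.1 ∧ IsReward H E.2) {δP δR : ℕ → ℝ}
    {CP : ℕ → Finset (S → A → S → ℝ)} {CR : ℕ → Finset (S → A → ℝ)}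
    (hCP : ∀ h ∈ Finset.Icc 1 H, IsFiniteCover kernelDist (δP h) ((fun E => E.1 h) '' Θ) (CP h))
    (hCR : ∀ h ∈ Finset.Icc 1 H, IsFiniteCover rewardDist (δR h) ((fun E => E.2 h) '' Θ) (CR h)) :
    ∃ (U : Fin (∏ h ∈ Finset.Icc 1 H, (CP h).card * (CR h).card) → ℕ → Set (S → A → S → ℝ))
      (W : Fin (∏ h ∈ Finset.Icc 1 H, (CP h).card * (CR h).card) → ℕ → Set (S → A → ℝ)),
      (∀ E ∈ Θ, ∃! k, E ∈ layeredClass H Θ (U k) (W k)) ∧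
      ∀ k, ∀ E ∈ layeredClass H Θ (U k) (W k), ∀ E' ∈ layeredClass H Θ (U k) (W k),
        ∀ pol, IsPolicy H pol → ∀ s,
          val H E.1 E.2 pol H s - val H E'.1 E'.2 pol H s ≤
            ∑ j ∈ Finset.range H, (2 * δR (H - j) + j * (2 * δP (H - j))) := by
  choose! labelP hlabelP_mem hdiamP using
    fun h hh => (hCP h hh).exists_labelling kernelDist_triangle_right
  choose! labelR hlabelR_mem hdiamR using
    fun h hh => (hCR h hh).exists_labelling rewardDist_triangle_right
  obtain ⟨c, hc⟩ := exists_fin_enum_pi (I := Finset.Icc 1 H) (C := fun h => CP h ×ˢ CR h)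
    (Finset.prod_congr rfl fun h _ => Finset.card_product (CP h) (CR h))
  refine ⟨fun k h => {p | labelP h p = (c k h).1}, fun k h => {r | labelR h r = (c k h).2},
    fun E hE => ?_, ?_⟩
  · obtain ⟨k, hk, hunique⟩ := hc (fun h => (labelP h (E.1 h), labelR h (E.2 h))) fun h hh =>
      Finset.mk_mem_product (hlabelP_mem h hh _ (Set.mem_image_of_mem _ hE))
        (hlabelR_mem h hh _ (Set.mem_image_of_mem _ hE))
    exact ⟨k, ⟨hE, fun h hh => Prod.ext_iff.1 (hk h hh)⟩,
      fun k' hk' => hunique k' fun h hh => Prod.ext_iff.2 (hk'.2 h hh)⟩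
  · rintro k E ⟨hE, hlabel⟩ E' ⟨hE', hlabel'⟩ pol hpol s
    have hkernel (h : ℕ) (hh : h ∈ Finset.Icc 1 H) : kernelDist (E.1 h) (E'.1 h) ≤ 2 * δP h :=
      hdiamP h hh _ (Set.mem_image_of_mem _ hE) _ (Set.mem_image_of_mem _ hE')
        ((hlabel h hh).1.trans (hlabel' h hh).1.symm)
    have hreward (h : ℕ) (hh : h ∈ Finset.Icc 1 H) : rewardDist (E.2 h) (E'.2 h) ≤ 2 * δR h :=
      hdiamR h hh _ (Set.mem_image_of_mem _ hE) _ (Set.mem_image_of_mem _ hE')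
        ((hlabel h hh).2.trans (hlabel' h hh).2.symm)
    exact val_sub_val_le (hΘ E hE).1 (hΘ E' hE').1 (hΘ E' hE').2 hpol hkernel hreward le_rfl s

theorem sum_double_cover_radii_le {H : ℕ} (hH : 1 ≤ H) {ε : ℝ} (hε : 0 ≤ ε) :
    ∑ j ∈ Finset.range H, (2 * (ε / (4 * (H : ℝ))) + j * (2 * (ε / (4 * (H : ℝ) ^ 2)))) ≤ ε := by
  have hH0 : (0 : ℝ) < H := Nat.cast_pos.2 hH
  have hterm (j : ℕ) (hj : j ∈ Finset.range H) :
      2 * (ε / (4 * (H : ℝ))) + j * (2 * (ε / (4 * (H : ℝ) ^ 2))) ≤ ε / H := by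
    have hj' : (j : ℝ) ≤ H := Nat.cast_le.2 (Finset.mem_range.1 hj).le
    calc 2 * (ε / (4 * (H : ℝ))) + j * (2 * (ε / (4 * (H : ℝ) ^ 2)))
        ≤ 2 * (ε / (4 * (H : ℝ))) + H * (2 * (ε / (4 * (H : ℝ) ^ 2))) := by gcongr
      _ = ε / H := by field_simp; ring
  calc ∑ j ∈ Finset.range H, (2 * (ε / (4 * (H : ℝ))) + j * (2 * (ε / (4 * (H : ℝ) ^ 2))))
      ≤ (Finset.range H).card • (ε / H) := Finset.sum_le_card_nsmul _ _ _ hterm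
    _ = ε := by rw [Finset.card_range, nsmul_eq_mul, mul_div_cancel₀ _ hH0.ne']

end LayeredPartition

/-- existence of a layered ε-value partition from layerwise
`l1`-covers of the transition and reward families. -/
theorem layered_value_partition_of_covers
    [Fintype S] [Fintype A] [Nonempty S] [Nonempty A]
    (H : ℕ) (hH : 1 ≤ H) (s₁ : S) (ε : ℝ) (hε : 0 < ε)
    (Θ : Set (Env S A))
    (hΘ : ∀ E ∈ Θ, IsKernel H E.1 ∧ IsReward H E.2)
    (πstar : Env S A → (ℕ → S → A → ℝ))
    (hπstar : ∀ E ∈ Θ, IsPolicy H (πstar E))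
    (hopt : ∀ E ∈ Θ, ∀ pol, IsPolicy H pol →
      val H E.1 E.2 pol H s₁ ≤ val H E.1 E.2 (πstar E) H s₁)
    (CP : ℕ → Finset (S → A → S → ℝ)) (CR : ℕ → Finset (S → A → ℝ))
    (LP LR : ℕ → ℕ)
    (hCP : ∀ h ∈ Finset.Icc 1 H, (CP h).card = LP h ∧
      ∀ E ∈ Θ, ∃ Q ∈ CP h,
        (Finset.univ.sup' Finset.univ_nonempty fun p : S × A =>
          ∑ s', |E.1 h p.1 p.2 s' - Q p.1 p.2 s'|) ≤ ε / (4 * (H : ℝ) ^ 2))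
    (hCR : ∀ h ∈ Finset.Icc 1 H, (CR h).card = LR h ∧
      ∀ E ∈ Θ, ∃ q ∈ CR h,
        (Finset.univ.sup' Finset.univ_nonempty fun p : S × A =>
          |E.2 h p.1 p.2 - q p.1 p.2|) ≤ ε / (4 * (H : ℝ))) :
    ∃ (K : ℕ) (T : Fin K → Set (Env S A))
      (As : Fin K → ℕ → Set (S → A → S → ℝ)) (Bs : Fin K → ℕ → Set (S → A → ℝ)),
      K ≤ ∏ h ∈ Finset.Icc 1 H, LP h * LR h ∧
      (∀ E ∈ Θ, ∃! k, E ∈ T k) ∧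
      (∀ k, T k = {E ∈ Θ | ∀ h ∈ Finset.Icc 1 H, E.1 h ∈ As k h ∧ E.2 h ∈ Bs k h}) ∧
      (∀ k, ∀ E ∈ T k, ∀ E' ∈ T k,
        val H E.1 E.2 (πstar E) H s₁ - val H E'.1 E'.2 (πstar E) H s₁ ≤ ε) := by
  obtain ⟨U, W, hpartition, hgap⟩ := layered_value_partition_of_covers_general hΘ
    (δP := fun _ => ε / (4 * (H : ℝ) ^ 2)) (δR := fun _ => ε / (4 * (H : ℝ)))
    (fun h hh => Set.forall_mem_image.2 (hCP h hh).2)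
    (fun h hh => Set.forall_mem_image.2 (hCR h hh).2)
  refine ⟨_, fun k => layeredClass H Θ (U k) (W k), U, W, ?_, hpartition, fun _ => rfl, ?_⟩
  · exact (Finset.prod_congr rfl fun h hh => by rw [(hCP h hh).1, (hCR h hh).1]).le
  · exact fun k E hE E' hE' => (hgap k E hE E' hE' _ (hπstar E hE.1) s₁).trans
      (sum_double_cover_radii_le hH hε.le)
end

section
/- Let Θ be a nonempty finite set of time-inhomogeneous tabular environments on common finite state space S, action space A and horizon H with fixed initial state s₁, let p be a probability measure on Θ, and let E ↦ π*_E assign to each E ∈ Θ a policy maximizing V_{1,·}^{E}(s₁). Let {Θ_k}_{k=1}^{K} be a partition of Θ such that: (i) (ε-value property) for every k and all E, E'' ∈ Θ_k, V_{1,π*_E}^{E}(s₁) − V_{1,π*_E}^{E''}(s₁) ≤ ε; and (ii) (layered property) under the conditional measure p(· | Θ_k), the layers (P_1, r_1), …, (P_H, r_H) are mutually independent. For each k with p(Θ_k) > 0, let Ẽ_k be the conditional mean environment, whose transitions and rewards are the entrywise means of P_h^{E} and r_h^{E} under p(· | Θ_k). Let E and E' be independent Θ-valued random variables each with law p, and let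 ζ(E) denote the index of the class containing E. Then E[ V_{1,π*_E}^{E}(s₁) − V_{1,π*_{E'}}^{E}(s₁) ] − E[ V_{1,π*_E}^{Ẽ_{ζ(E)}}(s₁) − V_{1,π*_{E'}}^{Ẽ_{ζ(E)}}(s₁) ] ≤ ε. -/
open Finset

variable {S A : Type*}

/-- Transition kernels of the conditional-mean (surrogate) environment of a class `T`. -/
noncomputable def condP (p : Env S A → ℝ) (T : Finset (Env S A)) :
    ℕ → S → A → S → ℝ :=
  fun h s a s' => (∑ E ∈ T, p E * E.1 h s a s') / (∑ E ∈ T, p E)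

/-- Mean rewards of the conditional-mean (surrogate) environment of a class `T`. -/
noncomputable def condR (p : Env S A → ℝ) (T : Finset (Env S A)) :
    ℕ → S → A → ℝ :=
  fun h s a => (∑ E ∈ T, p E * E.2 h s a) / (∑ E ∈ T, p E)

/-! Under the law of the environment conditioned on its class, a policy value is a sum of products
of one factor per layer. Independent layers make the mean of each product the product of the means,
so the mean value of a fixed policy is its value in the conditional-mean environment. The policy of
the independent copy `E'` is fixed given `E'`, so by the tower property its two expected values
agree; for the policy of `E` itself, the `ε`-value property bounds the difference class by class. -/

section CondMean

variable {Ω : Type*}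

/-- The mean of a function on `T` under the law with weights proportional to `p`, i.e. the
conditional expectation `E_p[f | T]`; it is `0` when `T` has total weight `0`. It is bundled as a
linear functional of `f`. -/
noncomputable def condMean (p : Ω → ℝ) (T : Finset Ω) : (Ω → ℝ) →ₗ[ℝ] ℝ :=
  (∑ ω ∈ T, p ω)⁻¹ • ∑ ω ∈ T, p ω • LinearMap.proj ω

variable {p : Ω → ℝ} {T : Finset Ω}

theorem condMean_apply (f : Ω → ℝ) :
    condMean p T f = (∑ ω ∈ T, p ω * f ω) / ∑ ω ∈ T, p ω := by
  simp [condMean, div_eq_inv_mul]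

theorem condMean_const (hw : ∑ ω ∈ T, p ω ≠ 0) (c : ℝ) : condMean p T (fun _ => c) = c := by
  rw [condMean_apply, ← sum_mul, mul_div_cancel_left₀ _ hw]

theorem sum_mul_condMean (hp : ∀ ω ∈ T, 0 ≤ p ω) (f : Ω → ℝ) :
    (∑ ω ∈ T, p ω) * condMean p T f = ∑ ω ∈ T, p ω * f ω := by
  rw [condMean_apply]
  refine mul_div_cancel_of_imp' fun hw => ?_
  exact sum_eq_zero fun ω hω => by rw [(sum_eq_zero_iff_of_nonneg hp).1 hw ω hω, zero_mul]

theorem sub_condMean_le (hp : ∀ ω ∈ T, 0 ≤ p ω) (hw : ∑ ω ∈ T, p ω ≠ 0) {c ε : ℝ} {f : Ω → ℝ}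
    (h : ∀ ω ∈ T, c - f ω ≤ ε) : c - condMean p T f ≤ ε := by
  refine le_of_mul_le_mul_left ?_ ((sum_nonneg hp).lt_of_ne' hw)
  rw [mul_sub, sum_mul_condMean hp, sum_mul, sum_mul, ← sum_sub_distrib]
  refine sum_le_sum fun ω hω => ?_
  rw [← mul_sub]
  exact mul_le_mul_of_nonneg_left (h ω hω) (hp ω hω)

end CondMean

section Independence

variable {Ω ι β : Type*}

open scoped Classical in
/-- Mutual independence of the variables `X i`, `i ∈ I`, under the law on `T` with weights
proportional to `p`, expressed by point probabilities. The product formula is multiplied through by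
the `#I`-th power of the total weight of `T`, one factor of which cancels. The exponent `#I - 1`
truncates for `I = ∅`, where the condition reads that the total weight is `1`. -/
def MutuallyIndepOn (p : Ω → ℝ) (T : Finset Ω) (I : Finset ι) (X : ι → Ω → β) : Prop :=
  ∀ g : ι → β, (∑ ω ∈ T, p ω) ^ (#I - 1) * (∑ ω ∈ T, if ∀ i ∈ I, X i ω = g i then p ω else 0) =
    ∏ i ∈ I, ∑ ω ∈ T, if X i ω = g i then p ω else 0

theorem sum_mul_comp_eq_sum_image [DecidableEq β] (p : Ω → ℝ) (T : Finset Ω) (x : Ω → β)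
    (f : β → ℝ) :
    ∑ ω ∈ T, p ω * f (x ω) =
      ∑ b ∈ T.image x, f b * ∑ ω ∈ T, if x ω = b then p ω else 0 := by
  simp_rw [mul_sum]
  rw [sum_comm]
  refine sum_congr rfl fun ω hω => ?_
  simp [mem_image_of_mem x hω, mul_comm]

-- Both sides are linear in each `f i`, so it is enough to know the identity for point indicators.
theorem mul_sum_mul_prod_comp [Fintype ι] [DecidableEq β] {p : Ω → ℝ} {T : Finset Ω}
    {X : ι → Ω → β} {c : ℝ} (h : ∀ g : ι → β, c * (∑ ω ∈ T, if ∀ i, X i ω = g i then p ω else 0) =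
      ∏ i, ∑ ω ∈ T, if X i ω = g i then p ω else 0) (f : ι → β → ℝ) :
    c * ∑ ω ∈ T, p ω * ∏ i, f i (X i ω) = ∏ i, ∑ ω ∈ T, p ω * f i (X i ω) := by
  classical
  have joint : ∀ ω ∈ T, p ω * ∏ i, f i (X i ω) =
      ∑ g ∈ Fintype.piFinset fun i => T.image (X i),
        (∏ i, f i (g i)) * if ∀ i, X i ω = g i then p ω else 0 := by
    intro ω hω
    rw [sum_eq_single_of_mem (fun i => X i ω)
      (Fintype.mem_piFinset.2 fun i => mem_image_of_mem (X i) hω)]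
    · simp [mul_comm]
    · intro g _ hg
      rw [if_neg fun hX => hg (funext hX).symm, mul_zero]
  calc c * ∑ ω ∈ T, p ω * ∏ i, f i (X i ω)
      = ∑ g ∈ Fintype.piFinset fun i => T.image (X i), (∏ i, f i (g i)) *
          (c * ∑ ω ∈ T, if ∀ i, X i ω = g i then p ω else 0) := by
        rw [sum_congr rfl joint, sum_comm, mul_sum]
        refine sum_congr rfl fun g _ => ?_
        rw [← mul_sum, mul_left_comm]
    _ = ∏ i, ∑ b ∈ T.image (X i), f i b * ∑ ω ∈ T, if X i ω = b then p ω else 0 := by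
        rw [prod_univ_sum]
        simp_rw [h, prod_mul_distrib]
    _ = ∏ i, ∑ ω ∈ T, p ω * f i (X i ω) := by
        simp_rw [← sum_mul_comp_eq_sum_image]

theorem MutuallyIndepOn.condMean_prod {p : Ω → ℝ} {T : Finset Ω} {I : Finset ι} {X : ι → Ω → β}
    (hX : MutuallyIndepOn p T I X) (hw : ∑ ω ∈ T, p ω ≠ 0) (f : ι → β → ℝ) :
    condMean p T (fun ω => ∏ i ∈ I, f i (X i ω)) =
      ∏ i ∈ I, condMean p T fun ω => f i (X i ω) := by
  classical
  rcases I.eq_empty_or_nonempty with rfl | hI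
  · simp only [prod_empty]
    exact condMean_const hw 1
  have hprod : (∑ ω ∈ T, p ω) ^ (#I - 1) * ∑ ω ∈ T, p ω * ∏ i ∈ I, f i (X i ω) =
      ∏ i ∈ I, ∑ ω ∈ T, p ω * f i (X i ω) := by
    obtain ⟨ω₀, -, -⟩ := exists_ne_zero_of_sum_ne_zero hw
    simp_rw [← prod_coe_sort I]
    refine mul_sum_mul_prod_comp (fun g => ?_) fun i : I => f i
    have hext : ∀ i : I, Function.extend (↑) g (fun i => X i ω₀) (i : ι) = g i :=
      Subtype.val_injective.extend_apply g _
    have hg := hX (Function.extend (↑) g fun i => X i ω₀)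
    rw [← prod_coe_sort I] at hg
    have hforall : ∀ ω, (∀ i ∈ I, X i ω = Function.extend (↑) g (fun i => X i ω₀) i) ↔
        ∀ i : I, X i ω = g i := fun ω => by
      simp only [← hext, Subtype.forall]
    simpa only [hext, hforall] using hg
  simp only [condMean_apply, prod_div_distrib, prod_const]
  rw [← hprod, ← pow_sub_one_mul hI.card_ne_zero, mul_div_mul_left _ _ (pow_ne_zero _ hw)]

theorem MutuallyIndepOn.condMean_prod_of_subset {p : Ω → ℝ} {T : Finset Ω} {I J : Finset ι}
    {X : ι → Ω → β} (hX : MutuallyIndepOn p T I X) (hw : ∑ ω ∈ T, p ω ≠ 0) (hJ : J ⊆ I)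
    (f : ι → β → ℝ) :
    condMean p T (fun ω => ∏ i ∈ J, f i (X i ω)) =
      ∏ i ∈ J, condMean p T fun ω => f i (X i ω) := by
  classical
  have h := hX.condMean_prod hw fun i => if i ∈ J then f i else 1
  have hmean : ∀ i, condMean p T (fun ω => (if i ∈ J then f i else 1) (X i ω)) =
      if i ∈ J then condMean p T fun ω => f i (X i ω) else 1 := fun i => by
    split_ifs
    · rfl
    · exact condMean_const hw 1
  simp only [hmean] at h
  simpa only [ite_apply, Pi.one_apply, prod_ite_mem, inter_eq_right.2 hJ] using h

end Independence

section Past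

variable {Ω β : Type*} {p : Ω → ℝ} {T : Finset Ω} {X : ℕ → Ω → β}

/-- `G` has mean `c` under `p(· | T)` and is uncorrelated with the past `X 1, …, X m`, in the sense
that its product with any product of functions of the individual `X h` has the expected mean. -/
def HasMeanIndepOfPast (p : Ω → ℝ) (T : Finset Ω) (X : ℕ → Ω → β) (m : ℕ) (G : Ω → ℝ) (c : ℝ) :
    Prop :=
  ∀ f : ℕ → β → ℝ, condMean p T (fun ω => (∏ h ∈ Icc 1 m, f h (X h ω)) * G ω) =
    (∏ h ∈ Icc 1 m, condMean p T fun ω => f h (X h ω)) * c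

namespace HasMeanIndepOfPast

variable {m : ℕ} {G G' : Ω → ℝ} {c c' : ℝ}

theorem condMean_eq (hG : HasMeanIndepOfPast p T X 0 G c) : condMean p T G = c := by
  simpa using hG 0

theorem zero : HasMeanIndepOfPast p T X m (fun _ => 0) 0 := fun f => by
  simp only [mul_zero]
  exact map_zero (condMean p T)

theorem add (hG : HasMeanIndepOfPast p T X m G c) (hG' : HasMeanIndepOfPast p T X m G' c') :
    HasMeanIndepOfPast p T X m (fun ω => G ω + G' ω) (c + c') := fun f => by
  simp only [mul_add, ← hG f, ← hG' f]
  exact map_add (condMean p T) _ _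

theorem const_mul (a : ℝ) (hG : HasMeanIndepOfPast p T X m G c) :
    HasMeanIndepOfPast p T X m (fun ω => a * G ω) (a * c) := fun f => by
  simp only [mul_left_comm _ a, ← hG f]
  exact map_smul (condMean p T) a _

theorem sum {α : Type*} {s : Finset α} {G : α → Ω → ℝ} {c : α → ℝ}
    (hG : ∀ i, HasMeanIndepOfPast p T X m (G i) (c i)) :
    HasMeanIndepOfPast p T X m (fun ω => ∑ i ∈ s, G i ω) (∑ i ∈ s, c i) := by
  classical
  induction s using Finset.induction_on with
  | empty => simpa only [sum_empty] using zero
  | insert i s hi ih => simpa only [sum_insert hi] using (hG i).add ih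

theorem one {H : ℕ} (hX : MutuallyIndepOn p T (Icc 1 H) X) (hw : ∑ ω ∈ T, p ω ≠ 0) (hm : m ≤ H) :
    HasMeanIndepOfPast p T X m (fun _ => 1) 1 := fun f => by
  simpa only [mul_one] using hX.condMean_prod_of_subset hw (Icc_subset_Icc_right hm) f

theorem comp_mul (hG : HasMeanIndepOfPast p T X (m + 1) G c) (φ : β → ℝ) :
    HasMeanIndepOfPast p T X m (fun ω => φ (X (m + 1) ω) * G ω)
      (condMean p T (fun ω => φ (X (m + 1) ω)) * c) := fun f => by
  have hf : ∀ h ∈ Icc 1 m, Function.update f (m + 1) φ h = f h := fun h hh =>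
    Function.update_of_ne (by have := (mem_Icc.1 hh).2; omega) _ _
  have hprod : ∀ F : ℕ → (β → ℝ) → ℝ, ∏ h ∈ Icc 1 (m + 1), F h (Function.update f (m + 1) φ h) =
      (∏ h ∈ Icc 1 m, F h (f h)) * F (m + 1) φ := fun F => by
    rw [prod_Icc_succ_top (by omega), Function.update_self]
    exact congrArg (· * _) (prod_congr rfl fun h hh => by rw [hf h hh])
  have h := hG (Function.update f (m + 1) φ)
  rw [hprod fun h ψ => condMean p T fun ω => ψ (X h ω)] at h
  simp only [fun ω => hprod fun h ψ => ψ (X h ω)] at h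
  simpa only [mul_assoc] using h

end HasMeanIndepOfPast

end Past

section Tower

variable {Ω κ : Type*} [DecidableEq κ] {p : Ω → ℝ} {Θ : Finset Ω} {ζ : Ω → κ}

theorem eq_fiber_of_existsUnique {T : κ → Finset Ω} (hTsub : ∀ k, T k ⊆ Θ)
    (hpart : ∀ ω ∈ Θ, ∃! k, ω ∈ T k) (hζ : ∀ ω ∈ Θ, ω ∈ T (ζ ω)) :
    T = fun k => {ω ∈ Θ | ζ ω = k} := by
  ext k ω
  rw [mem_filter]
  refine ⟨fun h => ⟨hTsub k h, ?_⟩, fun ⟨hω, hk⟩ => hk ▸ hζ ω hω⟩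
  exact (hpart ω (hTsub k h)).unique (hζ ω (hTsub k h)) h

theorem sum_fiber_ne_zero (hp : ∀ ω ∈ Θ, 0 ≤ p ω) {ω : Ω} (hω : ω ∈ Θ) (hpω : p ω ≠ 0) :
    ∑ ω' ∈ Θ with ζ ω' = ζ ω, p ω' ≠ 0 := by
  refine (sum_pos' (fun ω' h => hp ω' (mem_filter.1 h).1) ⟨ω, ?_, (hp ω hω).lt_of_ne' hpω⟩).ne'
  exact mem_filter.2 ⟨hω, rfl⟩

theorem sum_mul_condMean_fiber (hp : ∀ ω ∈ Θ, 0 ≤ p ω) (f : Ω → ℝ) :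
    ∑ ω ∈ Θ, p ω * condMean p {ω' ∈ Θ | ζ ω' = ζ ω} f = ∑ ω ∈ Θ, p ω * f ω := by
  have hmaps : ∀ ω ∈ Θ, ζ ω ∈ Θ.image ζ := fun ω hω => mem_image_of_mem ζ hω
  rw [← sum_fiberwise_of_maps_to hmaps, ← sum_fiberwise_of_maps_to hmaps fun ω => p ω * f ω]
  refine sum_congr rfl fun k _ => ?_
  rw [← sum_mul_condMean (fun ω hω => hp ω (mem_filter.1 hω).1) f, sum_mul]
  exact sum_congr rfl fun ω hω => by rw [(mem_filter.1 hω).2]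

theorem sum_sum_mul_sub (hp1 : ∑ ω ∈ Θ, p ω = 1) (D : Ω → Ω → ℝ) :
    ∑ ω ∈ Θ, ∑ ω' ∈ Θ, p ω * p ω' * (D ω ω - D ω ω') =
      ∑ ω ∈ Θ, p ω * D ω ω - ∑ ω' ∈ Θ, p ω' * ∑ ω ∈ Θ, p ω * D ω ω' := by
  simp_rw [mul_sub, sum_sub_distrib, mul_sum]
  congr 1
  · refine sum_congr rfl fun ω _ => ?_
    rw [← sum_mul, ← mul_sum, hp1, mul_one]
  · rw [sum_comm]
    exact sum_congr rfl fun ω' _ => sum_congr rfl fun ω _ => by ring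

-- For fixed `ω'` the mean over `ω` does not distinguish `F` from `M`: only the diagonal matters.
theorem sum_sum_regret_sub_le (hp : ∀ ω ∈ Θ, 0 ≤ p ω) (hp1 : ∑ ω ∈ Θ, p ω = 1)
    {F M : Ω → Ω → ℝ} {ε : ℝ}
    (hM : ∀ ω ∈ Θ, p ω ≠ 0 → ∀ ω', M ω ω' = condMean p {η ∈ Θ | ζ η = ζ ω} (F · ω'))
    (hF : ∀ ω ∈ Θ, ∀ η ∈ Θ, ζ ω = ζ η → F ω ω - F η ω ≤ ε) :
    (∑ ω ∈ Θ, ∑ ω' ∈ Θ, p ω * p ω' * (F ω ω - F ω ω')) -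
      ∑ ω ∈ Θ, ∑ ω' ∈ Θ, p ω * p ω' * (M ω ω - M ω ω') ≤ ε := by
  have cross (ω' : Ω) : ∑ ω ∈ Θ, p ω * M ω ω' = ∑ ω ∈ Θ, p ω * F ω ω' := by
    rw [← sum_mul_condMean_fiber (ζ := ζ) hp (F · ω')]
    refine sum_congr rfl fun ω hω => ?_
    by_cases hpω : p ω = 0
    · simp only [hpω, zero_mul]
    · rw [hM ω hω hpω]
  have diag : ∀ ω ∈ Θ, p ω * F ω ω - p ω * M ω ω ≤ p ω * ε := fun ω hω => by
    rw [← mul_sub]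
    by_cases hpω : p ω = 0
    · simp only [hpω, zero_mul, le_refl]
    refine mul_le_mul_of_nonneg_left ?_ (hp ω hω)
    rw [hM ω hω hpω]
    refine sub_condMean_le (fun η h => hp η (mem_filter.1 h).1) (sum_fiber_ne_zero hp hω hpω) ?_
    exact fun η h => hF ω hω η (mem_filter.1 h).1 (mem_filter.1 h).2.symm
  calc _ = ∑ ω ∈ Θ, (p ω * F ω ω - p ω * M ω ω) := by
        simp only [sum_sum_mul_sub hp1, cross, sub_sub_sub_cancel_right, sum_sub_distrib]
    _ ≤ ∑ ω ∈ Θ, p ω * ε := sum_le_sum diag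
    _ = ε := by rw [← sum_mul, hp1, one_mul]

end Tower

section Surrogate

variable [Fintype S] [Fintype A] {p : Env S A → ℝ} {T : Finset (Env S A)}

/-- The layer `(P_h, r_h)` of an environment. -/
abbrev layer (h : ℕ) (E : Env S A) : (S → A → S → ℝ) × (S → A → ℝ) := (E.1 h, E.2 h)

theorem hasMeanIndepOfPast_val {H : ℕ} (hlayer : MutuallyIndepOn p T (Icc 1 H) layer)
    (hw : ∑ E ∈ T, p E ≠ 0) (pol : ℕ → S → A → ℝ) {k : ℕ} (hk : k ≤ H) (s : S) :
    HasMeanIndepOfPast p T layer (H - k) (fun E => val H E.1 E.2 pol k s)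
      (val H (condP p T) (condR p T) pol k s) := by
  induction k generalizing s with
  | zero => exact .zero
  | succ k ih =>
    have factor_mul {G c} (hG : HasMeanIndepOfPast p T layer (H - k) G c)
        (φ : (S → A → S → ℝ) × (S → A → ℝ) → ℝ) :
        HasMeanIndepOfPast p T layer (H - (k + 1)) (fun E => φ (layer (H - k) E) * G E)
          (condMean p T (fun E => φ (layer (H - k) E)) * c) := by
      rw [show H - k = H - (k + 1) + 1 by omega] at hG ⊢
      exact hG.comp_mul φ
    have hreward (a : A) : HasMeanIndepOfPast p T layer (H - (k + 1))
        (fun E => E.2 (H - k) s a) (condR p T (H - k) s a) := by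
      simpa only [layer, mul_one, condR, condMean_apply] using
        factor_mul (.one hlayer hw (Nat.sub_le H k)) fun ℓ => ℓ.2 s a
    have htransition (a : A) (s' : S) : HasMeanIndepOfPast p T layer (H - (k + 1))
        (fun E => E.1 (H - k) s a s' * val H E.1 E.2 pol k s')
        (condP p T (H - k) s a s' * val H (condP p T) (condR p T) pol k s') := by
      simpa only [layer, condP, condMean_apply] using
        factor_mul (ih (by omega) s') fun ℓ => ℓ.1 s a s'
    exact .sum fun a => ((hreward a).add (.sum (htransition a))).const_mul (pol (H - k) s a)

theorem condMean_val {H : ℕ} (hlayer : MutuallyIndepOn p T (Icc 1 H) layer)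
    (hw : ∑ E ∈ T, p E ≠ 0) (pol : ℕ → S → A → ℝ) (s : S) :
    condMean p T (fun E => val H E.1 E.2 pol H s) =
      val H (condP p T) (condR p T) pol H s :=
  HasMeanIndepOfPast.condMean_eq (X := layer) <| by
    simpa only [Nat.sub_self] using hasMeanIndepOfPast_val hlayer hw pol le_rfl s

theorem surrogate_learning_general {κ : Type*} [DecidableEq κ] (H : ℕ) (s₁ : S)
    (Θ : Finset (Env S A)) (hp0 : ∀ E ∈ Θ, 0 ≤ p E) (hp1 : ∑ E ∈ Θ, p E = 1)
    (π : Env S A → ℕ → S → A → ℝ) (ε : ℝ) (ζ : Env S A → κ)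
    (hval : ∀ E ∈ Θ, ∀ E'' ∈ Θ, ζ E = ζ E'' →
      val H E.1 E.2 (π E) H s₁ - val H E''.1 E''.2 (π E) H s₁ ≤ ε)
    (hlayer : ∀ k, MutuallyIndepOn p {E ∈ Θ | ζ E = k} (Icc 1 H) layer) :
    (∑ E ∈ Θ, ∑ E' ∈ Θ, p E * p E' *
        (val H E.1 E.2 (π E) H s₁ - val H E.1 E.2 (π E') H s₁)) -
      (∑ E ∈ Θ, ∑ E' ∈ Θ, p E * p E' *
        (val H (condP p {E'' ∈ Θ | ζ E'' = ζ E}) (condR p {E'' ∈ Θ | ζ E'' = ζ E}) (π E) H s₁ -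
          val H (condP p {E'' ∈ Θ | ζ E'' = ζ E}) (condR p {E'' ∈ Θ | ζ E'' = ζ E})
            (π E') H s₁)) ≤ ε :=
  sum_sum_regret_sub_le hp0 hp1
    (F := fun E E' => val H E.1 E.2 (π E') H s₁)
    (M := fun E E' => val H (condP p {E'' ∈ Θ | ζ E'' = ζ E}) (condR p {E'' ∈ Θ | ζ E'' = ζ E})
      (π E') H s₁)
    (fun E hE hpE E' => (condMean_val (hlayer (ζ E)) (sum_fiber_ne_zero hp0 hE hpE) (π E') s₁).symm)
    hval

end Surrogate

open scoped Classical in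
/-- surrogate environment learning lemma.  Replacing the true
environment by the conditional-mean environment of its partition class changes the
Thompson-Sampling-type expected regret by at most `ε`.  Here `E, E'` are i.i.d. with
law `p` on the finite set `Θ`, so expectations are weighted double sums. -/
theorem surrogate_learning
    [Fintype S] [Fintype A] [Nonempty S] [Nonempty A]
    (H : ℕ) (hH : 1 ≤ H) (s₁ : S)
    (Θ : Finset (Env S A)) (hΘne : Θ.Nonempty)
    (hΘ : ∀ E ∈ Θ, IsKernel H E.1 ∧ IsReward H E.2)
    (p : Env S A → ℝ) (hp0 : ∀ E, 0 ≤ p E) (hp1 : ∑ E ∈ Θ, p E = 1)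
    (πstar : Env S A → (ℕ → S → A → ℝ))
    (hπstar : ∀ E ∈ Θ, IsPolicy H (πstar E))
    (hopt : ∀ E ∈ Θ, ∀ pol, IsPolicy H pol →
      val H E.1 E.2 pol H s₁ ≤ val H E.1 E.2 (πstar E) H s₁)
    (ε : ℝ) (K : ℕ) (T : Fin K → Finset (Env S A))
    (hTsub : ∀ k, T k ⊆ Θ)
    (hpart : ∀ E ∈ Θ, ∃! k, E ∈ T k)
    (ζ : Env S A → Fin K) (hζ : ∀ E ∈ Θ, E ∈ T (ζ E))
    -- (i) ε-value property of the partition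
    (hval : ∀ k, ∀ E ∈ T k, ∀ E'' ∈ T k,
      val H E.1 E.2 (πstar E) H s₁ - val H E''.1 E''.2 (πstar E) H s₁ ≤ ε)
    -- (ii) layered property: under `p(· | Θ_k)` the layers `(P_h, r_h)`, `h = 1,…,H`,
    -- are mutually independent
    (hlayer : ∀ k, ∀ g : ℕ → (S → A → S → ℝ) × (S → A → ℝ),
      (∑ E ∈ T k, p E) ^ (H - 1) *
          (∑ E ∈ T k,
            if ∀ h ∈ Finset.Icc 1 H, (E.1 h, E.2 h) = g h then p E else 0) =
        ∏ h ∈ Finset.Icc 1 H,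
          (∑ E ∈ T k, if (E.1 h, E.2 h) = g h then p E else 0)) :
    (∑ E ∈ Θ, ∑ E' ∈ Θ, p E * p E' *
        (val H E.1 E.2 (πstar E) H s₁ - val H E.1 E.2 (πstar E') H s₁)) -
      (∑ E ∈ Θ, ∑ E' ∈ Θ, p E * p E' *
        (val H (condP p (T (ζ E))) (condR p (T (ζ E))) (πstar E) H s₁ -
          val H (condP p (T (ζ E))) (condR p (T (ζ E))) (πstar E') H s₁)) ≤ ε := by
  obtain rfl := eq_fiber_of_existsUnique hTsub hpart hζ
  refine surrogate_learning_general H s₁ Θ (fun E _ => hp0 E) hp1 πstar ε ζ ?_ fun k g => ?_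
  · exact fun E hE E'' hE'' h => hval (ζ E) E (hζ E hE) E'' (h ▸ hζ E'' hE'')
  · convert hlayer k g
    rw [Nat.card_Icc, Nat.add_sub_cancel]
end
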